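/- Let 0 < λ₁ < λ₂ < λ₃, set m = (λ₂² − λ₁²)/(λ₃² − λ₁²), μ(m) = E(m)/K(m), and w² = λ₃² − (λ₃² − λ₁²)·μ(m). Then the mean of the KdV wave field in the genus-1 soliton condensate satisfies (4/π)·∫₀^{λ₁} η²(w² − η²)/√((λ₁² − η²)(λ₂² − η²)(λ₃² − η²)) dη + (4/π)·∫_{λ₂}^{λ₃} η²(η² − w²)/√((η² − λ₁²)(η² − λ₂²)(λ₃² − η²)) dη = λ₁² + λ₂² − λ₃² + 2(λ₃² − λ₁²)·μ(m). -/

import Mathlib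

/-!
The identity does not depend on the value of `w²`: for every real `W`, the two band integrals
with `W` in place of `w²` add up to `(π/4)(l1² + l2² + l3² - 2W)` (`mean_general`), a residue
at infinity on the curve `y² = x(x - a)(x - b)(x - c)`, where `x = η²`, `a = l1²`, `b = l2²`,
`c = l3²`.

The proof replaces the residue by a real substitution. Let `σ` be the Möbius involution with
`0 ↔ b`, `a ↔ c` (`bandSwap`); it maps the band `[b, c]` onto `[0, a]` and preserves `dx/√|P(x)|`,
where `P` is the quartic above (`Bands.swap_radical`). Hence the lower-band integral can be moved
to the upper band (`Bands.lower_band`), and the two integrands combine to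
`(x(x - W) - σ(σ - W))/√R = (x - σ)(x + σ - W)/√R`, where `R = (x - a)(x - b)(c - x)`.
In terms of `u = x + σ(x)`, which takes the values `b` and `e = a + c` at the ends of the upper
band, the combined differential is `(u - W) du / (2√((u - b)(e - u)))`, with an explicit
antiderivative built from an arcsine and a square root (`Bands.sum_integral`).
-/

/-- The complete elliptic integral of the first kind, `K(m) = ∫₀^{π/2} dθ/√(1 - m sin²θ)`. -/
noncomputable def ellipticK (m : ℝ) : ℝ :=
  ∫ θ in (0:ℝ)..(Real.pi / 2), 1 / Real.sqrt (1 - m * Real.sin θ ^ 2)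

/-- The complete elliptic integral of the second kind, `E(m) = ∫₀^{π/2} √(1 - m sin²θ) dθ`. -/
noncomputable def ellipticE (m : ℝ) : ℝ :=
  ∫ θ in (0:ℝ)..(Real.pi / 2), Real.sqrt (1 - m * Real.sin θ ^ 2)

section Helpers

/-- The Möbius involution `σ(x) = p(x - b)/(x - p)`, which exchanges `0` and `b` and has its pole
at `p`. Under `Bands a b c p` it also exchanges `a` and `c`, hence the bands `[0, a]` and `[b, c]`
of the spectral variable `x = η²`. -/
noncomputable def bandSwap (b p x : ℝ) : ℝ := p * (x - b) / (x - p)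

/-- The configuration `0 < a < p < b < c` in which `p` is the pole of the involution exchanging
`0 ↔ b` and `a ↔ c`; the equation `hp` is equivalent to `bandSwap b p c = a`. -/
structure Bands (a b c p : ℝ) : Prop where
  a_pos : 0 < a
  ap : a < p
  pb : p < b
  bc : b < c
  hp : p * (a + c - b) = a * c

/-- The pole `p = ac/(a + c - b)` is always finite and lies in the gap `(a, b)`, since `b < a + c`. -/
theorem exists_pole {a b c : ℝ} (ha : 0 < a) (hab : a < b) (hbc : b < c) :
    ∃ p, Bands a b c p := by
  have h : 0 < a + c - b := by linarith
  refine ⟨a * c / (a + c - b), ha, ?_, ?_, hbc, by field_simp⟩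
  · rw [lt_div_iff₀ h]; nlinarith
  · rw [div_lt_iff₀ h]; nlinarith

/-! ### Elementary antiderivatives -/

theorem arcsin_deriv {b e u : ℝ} (h1 : b < u) (h2 : u < e) :
    HasDerivAt (fun u => Real.arcsin ((2 * u - b - e) / (e - b)))
      (1 / Real.sqrt ((u - b) * (e - u))) u := by
  have hd : 0 < e - b := by linarith
  have hne1 : (2 * u - b - e) / (e - b) ≠ -1 := by
    rw [Ne, div_eq_iff hd.ne']; intro h; linarith
  have hne2 : (2 * u - b - e) / (e - b) ≠ 1 := by
    rw [Ne, div_eq_iff hd.ne']; intro h; linarith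
  have h := (Real.hasDerivAt_arcsin hne1 hne2).comp u
    (((((hasDerivAt_id u).const_mul 2).sub_const b).sub_const e).div_const (e - b))
  refine h.congr_deriv ?_
  have : 1 - ((2 * u - b - e) / (e - b)) ^ 2 = (2 / (e - b)) ^ 2 * ((u - b) * (e - u)) := by
    field_simp; ring
  rw [this, Real.sqrt_mul (by positivity), Real.sqrt_sq (by positivity)]
  have : 0 < Real.sqrt ((u - b) * (e - u)) := Real.sqrt_pos.2 (by nlinarith)
  field_simp

theorem sqrt_deriv {b e u : ℝ} (h1 : b < u) (h2 : u < e) :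
    HasDerivAt (fun u => Real.sqrt ((u - b) * (e - u)))
      (((b + e) / 2 - u) / Real.sqrt ((u - b) * (e - u))) u := by
  have h0 : 0 < (u - b) * (e - u) := by nlinarith
  have h := (((hasDerivAt_id u).sub_const b).mul ((hasDerivAt_id u).const_sub e)).sqrt
    (by simpa using h0.ne')
  refine h.congr_deriv ?_
  have := Real.sqrt_pos.2 h0
  simp only [id, Pi.mul_apply]
  field_simp
  ring

/-! ### The involution exchanging the two bands -/

variable {a b c p : ℝ}

theorem bandSwap_deriv {x : ℝ} (hx : p < x) :
    HasDerivAt (bandSwap b p) (p * (b - p) / (x - p) ^ 2) x := by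
  have hx' : x - p ≠ 0 := by linarith
  have := (((hasDerivAt_id x).sub_const b).const_mul p).div ((hasDerivAt_id x).sub_const p) hx'
  refine this.congr_deriv ?_
  simp only [id]
  field_simp; ring

theorem Bands.swap_mem (h : Bands a b c p) {x : ℝ} (h1 : b < x) (h2 : x < c) :
    0 < bandSwap b p x ∧ bandSwap b p x < a := by
  obtain ⟨ha, hap, hpb, hbc, hp⟩ := h
  have : 0 < x - p := by linarith
  unfold bandSwap
  refine ⟨div_pos (mul_pos (by linarith) (by linarith)) this, ?_⟩
  rw [div_lt_iff₀ this]
  nlinarith [mul_pos (sub_pos.2 hap) (sub_pos.2 h2)]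

theorem Bands.swap_mem' (h : Bands a b c p) {x : ℝ} (h1 : 0 < x) (h2 : x < a) :
    b < bandSwap b p x ∧ bandSwap b p x < c := by
  obtain ⟨ha, hap, hpb, hbc, hp⟩ := h
  have : x - p < 0 := by linarith
  unfold bandSwap
  rw [lt_div_iff_of_neg this, div_lt_iff_of_neg this]
  constructor
  · nlinarith
  · nlinarith [mul_pos (sub_pos.2 (hpb.trans hbc)) (sub_pos.2 h2)]

theorem Bands.swap_swap (h : Bands a b c p) {x : ℝ} (hx : x ≠ p) :
    bandSwap b p (bandSwap b p x) = x := by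
  obtain ⟨ha, hap, hpb, hbc, hp⟩ := h
  have h1 : x - p ≠ 0 := sub_ne_zero.2 hx
  have h2 : bandSwap b p x - p = p * (p - b) / (x - p) := by unfold bandSwap; field_simp; ring
  have h3 : p ≠ 0 := by linarith
  have h4 : p - b ≠ 0 := by linarith
  rw [bandSwap, h2]
  unfold bandSwap
  field_simp; ring

/-- Invariance of the holomorphic differential `dx/√|P(x)|`, `P(x) = x(x - a)(x - b)(x - c)`,
under `σ`, in squared form: `(dσ/dx)² |P(x)| = |P(σ(x))|`. -/
theorem Bands.swap_radical (h : Bands a b c p) {x : ℝ} (hx : p < x) :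
    (p * (b - p) / (x - p) ^ 2) ^ 2 * x * ((x - a) * (x - b) * (c - x)) =
    bandSwap b p x *
      ((a - bandSwap b p x) * (b - bandSwap b p x) * (c - bandSwap b p x)) := by
  obtain ⟨ha, hap, hpb, hbc, hp⟩ := h
  have h1 : x - p ≠ 0 := by linarith
  have e1 : b - bandSwap b p x = x * (b - p) / (x - p) := by unfold bandSwap; field_simp; ring
  have e2 : (a - bandSwap b p x) * (c - bandSwap b p x) =
      p * (b - p) * (c - x) * (x - a) / (x - p) ^ 2 := by
    unfold bandSwap; field_simp
    linear_combination (-p * b + 2 * p * x - x ^ 2) * hp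
  rw [mul_right_comm (a - _), e2, e1, bandSwap]
  field_simp

/-- With `u = x + σ(x)`, one has `x(x - b) = (u - b)(x - p)` and
`(x - a)(c - x) = (a + c - u)(x - p)`, so that the radicand becomes quadratic in `u` up to a square
factor and a factor `x`. -/
theorem Bands.radical_eq (h : Bands a b c p) {x : ℝ} (hx : b < x) :
    (x - a) * (x - b) * (c - x) =
      (x + bandSwap b p x - b) * (a + c - (x + bandSwap b p x)) * ((x - p) ^ 2 / x) := by
  obtain ⟨ha, hap, hpb, hbc, hp⟩ := h
  have h1 : x - p ≠ 0 := by linarith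
  have h0 : x ≠ 0 := by linarith
  have e1 : x + bandSwap b p x - b = x * (x - b) / (x - p) := by unfold bandSwap; field_simp; ring
  have e2 : a + c - (x + bandSwap b p x) = (x - a) * (c - x) / (x - p) := by
    unfold bandSwap; field_simp; linear_combination -hp
  rw [e1, e2]; field_simp

/-! ### The uniformizing variable `u = η² + σ(η²)` on the upper band -/

variable {l1 l2 l3 : ℝ}

/-- The square root in the denominator of the density of states on the upper band `(l2, l3)`. -/
noncomputable def upperRadical (l1 l2 l3 η : ℝ) : ℝ :=
  Real.sqrt ((η ^ 2 - l1 ^ 2) * (η ^ 2 - l2 ^ 2) * (l3 ^ 2 - η ^ 2))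

theorem bandSwap_sq_deriv {b p η : ℝ} (hx : p < η ^ 2) :
    HasDerivAt (fun t => bandSwap b p (t ^ 2)) (p * (b - p) / (η ^ 2 - p) ^ 2 * (2 * η)) η := by
  have h := HasDerivAt.comp (h := fun t : ℝ => t ^ 2) η (bandSwap_deriv (b := b) hx)
    (hasDerivAt_pow 2 η)
  exact h.congr_deriv (by simp)

theorem uniformizer_deriv {b p η : ℝ} (hx : p < η ^ 2) :
    HasDerivAt (fun t => t ^ 2 + bandSwap b p (t ^ 2))
      (2 * η * (η ^ 2 - bandSwap b p (η ^ 2)) / (η ^ 2 - p)) η := by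
  refine ((hasDerivAt_pow 2 η).add (bandSwap_sq_deriv (b := b) hx)).congr_deriv ?_
  have : η ^ 2 - p ≠ 0 := by linarith
  unfold bandSwap
  field_simp
  ring

theorem sq_mem (h2 : 0 < l2) {η : ℝ} (hη : η ∈ Set.Ioo l2 l3) :
    0 < η ∧ l2 ^ 2 < η ^ 2 ∧ η ^ 2 < l3 ^ 2 := by
  have := hη.1
  have := hη.2
  exact ⟨by linarith, by nlinarith, by nlinarith⟩

theorem Bands.radicand_pos (h : Bands a b c p) {x : ℝ} (h1 : b < x) (h2 : x < c) :
    0 < (x - a) * (x - b) * (c - x) := by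
  obtain ⟨ha, hap, hpb, hbc, hp⟩ := h
  exact mul_pos (mul_pos (by linarith) (by linarith)) (by linarith)

theorem Bands.uniformizer_mem (h : Bands a b c p) {x : ℝ} (h1 : b < x) (h2 : x < c) :
    b < x + bandSwap b p x ∧ x + bandSwap b p x < a + c := by
  have := h.swap_mem h1 h2
  constructor <;> linarith [this.1, this.2]

theorem Bands.sqrt_uniformizer (h : Bands (l1 ^ 2) (l2 ^ 2) (l3 ^ 2) p) {η : ℝ} (h0 : 0 < η)
    (hx : l2 ^ 2 < η ^ 2) :
    Real.sqrt ((η ^ 2 + bandSwap (l2 ^ 2) p (η ^ 2) - l2 ^ 2) *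
        (l1 ^ 2 + l3 ^ 2 - (η ^ 2 + bandSwap (l2 ^ 2) p (η ^ 2)))) * ((η ^ 2 - p) / η) =
      upperRadical l1 l2 l3 η := by
  have : 0 < η ^ 2 - p := by linarith [h.pb]
  rw [upperRadical, h.radical_eq hx, ← div_pow,
    Real.sqrt_mul' _ (sq_nonneg ((η ^ 2 - p) / η)), Real.sqrt_sq (by positivity)]

/-- The angle `arcsin ((2u - b - e)/(e - b))`, `u = η² + σ(η²)`, `b = l2²`, `e = l1² + l3²`, is an
antiderivative of `2(x - σ(x))/√R` in `η`. -/
theorem Bands.angle_deriv (h : Bands (l1 ^ 2) (l2 ^ 2) (l3 ^ 2) p) (hl : 0 < l2) {η : ℝ}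
    (hη : η ∈ Set.Ioo l2 l3) :
    HasDerivAt (fun t => Real.arcsin ((2 * (t ^ 2 + bandSwap (l2 ^ 2) p (t ^ 2)) - l2 ^ 2 -
        (l1 ^ 2 + l3 ^ 2)) / (l1 ^ 2 + l3 ^ 2 - l2 ^ 2)))
      (2 * (η ^ 2 - bandSwap (l2 ^ 2) p (η ^ 2)) / upperRadical l1 l2 l3 η) η := by
  obtain ⟨h0, hb, hc⟩ := sq_mem hl hη
  obtain ⟨hu1, hu2⟩ := h.uniformizer_mem hb hc
  have hp : 0 < η ^ 2 - p := by linarith [h.pb]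
  refine ((arcsin_deriv hu1 hu2).comp η
    (uniformizer_deriv (b := l2 ^ 2) (p := p) (by linarith))).congr_deriv ?_
  rw [← h.sqrt_uniformizer h0 hb]
  have := Real.sqrt_pos.2 (mul_pos (sub_pos.2 hu1) (sub_pos.2 hu2))
  field_simp

/-- The other half of the antiderivative: `√((u - b)(e - u))` has derivative
`((b + e)/2 - u) · 2(x - σ(x))/√R` in `η`. -/
theorem Bands.root_deriv (h : Bands (l1 ^ 2) (l2 ^ 2) (l3 ^ 2) p) (hl : 0 < l2) {η : ℝ}
    (hη : η ∈ Set.Ioo l2 l3) :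
    HasDerivAt (fun t => Real.sqrt ((t ^ 2 + bandSwap (l2 ^ 2) p (t ^ 2) - l2 ^ 2) *
        (l1 ^ 2 + l3 ^ 2 - (t ^ 2 + bandSwap (l2 ^ 2) p (t ^ 2)))))
      (((l2 ^ 2 + (l1 ^ 2 + l3 ^ 2)) / 2 - (η ^ 2 + bandSwap (l2 ^ 2) p (η ^ 2))) *
        (2 * (η ^ 2 - bandSwap (l2 ^ 2) p (η ^ 2)) / upperRadical l1 l2 l3 η)) η := by
  obtain ⟨h0, hb, hc⟩ := sq_mem hl hη
  obtain ⟨hu1, hu2⟩ := h.uniformizer_mem hb hc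
  have hp : 0 < η ^ 2 - p := by linarith [h.pb]
  refine ((sqrt_deriv hu1 hu2).comp η
    (uniformizer_deriv (b := l2 ^ 2) (p := p) (by linarith))).congr_deriv ?_
  rw [← h.sqrt_uniformizer h0 hb]
  have := Real.sqrt_pos.2 (mul_pos (sub_pos.2 hu1) (sub_pos.2 hu2))
  field_simp

theorem Bands.swap_continuousOn (h : Bands (l1 ^ 2) (l2 ^ 2) (l3 ^ 2) p) (hl : 0 < l2) :
    ContinuousOn (fun t => bandSwap (l2 ^ 2) p (t ^ 2)) (Set.Icc l2 l3) := by
  intro η hη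
  have : l2 ^ 2 ≤ η ^ 2 := by nlinarith [hη.1]
  exact (bandSwap_sq_deriv (by linarith [h.pb])).continuousAt.continuousWithinAt

theorem Bands.swap_lt (h : Bands a b c p) {x : ℝ} (hx : b ≤ x) : bandSwap b p x < x := by
  obtain ⟨ha, hap, hpb, hbc, hp⟩ := h
  unfold bandSwap
  rw [div_lt_iff₀ (by linarith)]
  nlinarith [mul_pos (ha.trans hap) (sub_pos.2 hpb), sq_nonneg (x - p)]

/-- The endpoint singularities are integrable: `2(x - σ(x))/√R` is nonnegative and has the
continuous antiderivative of `Bands.angle_deriv`, and `x - σ(x)` is bounded away from `0`. -/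
theorem Bands.integrable (h : Bands (l1 ^ 2) (l2 ^ 2) (l3 ^ 2) p) (hl : 0 < l2) (h23 : l2 < l3)
    {g : ℝ → ℝ} (hg : ContinuousOn g (Set.Icc l2 l3)) :
    IntervalIntegrable (fun η => g η / upperRadical l1 l2 l3 η) MeasureTheory.volume l2 l3 := by
  have hS := h.swap_continuousOn hl
  have hlt : ∀ η ∈ Set.Icc l2 l3, 0 < η ^ 2 - bandSwap (l2 ^ 2) p (η ^ 2) := fun η hη =>
    sub_pos.2 (h.swap_lt (by nlinarith [hη.1]))
  have key : IntervalIntegrable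
      (fun η => 2 * (η ^ 2 - bandSwap (l2 ^ 2) p (η ^ 2)) / upperRadical l1 l2 l3 η)
      MeasureTheory.volume l2 l3 := by
    apply intervalIntegral.intervalIntegrable_deriv_of_nonneg (g :=
      fun t => Real.arcsin ((2 * (t ^ 2 + bandSwap (l2 ^ 2) p (t ^ 2)) - l2 ^ 2 -
        (l1 ^ 2 + l3 ^ 2)) / (l1 ^ 2 + l3 ^ 2 - l2 ^ 2)))
    · rw [Set.uIcc_of_le h23.le]
      exact Real.continuous_arcsin.comp_continuousOn (by fun_prop)
    · rw [min_eq_left h23.le, max_eq_right h23.le]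
      exact fun η hη => h.angle_deriv hl hη
    · rw [min_eq_left h23.le, max_eq_right h23.le]
      intro η hη
      have := hlt η (Set.Ioo_subset_Icc_self hη)
      exact div_nonneg (by linarith) (Real.sqrt_nonneg _)
  have hq : ContinuousOn (fun η => g η / (2 * (η ^ 2 - bandSwap (l2 ^ 2) p (η ^ 2))))
      (Set.uIcc l2 l3) := by
    rw [Set.uIcc_of_le h23.le]
    refine hg.div (by fun_prop) fun η hη => ?_
    have := hlt η hη
    positivity
  refine (key.continuousOn_mul hq).congr ?_
  rw [Set.uIoc_of_le h23.le]
  intro η hη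
  have := hlt η (Set.Ioc_subset_Icc_self hη)
  dsimp only
  rw [div_mul_div_comm, mul_comm (g η), mul_div_mul_left _ _ (by positivity)]

/-! ### Transport of the lower band and evaluation -/

theorem Bands.swap_image (h : Bands (l1 ^ 2) (l2 ^ 2) (l3 ^ 2) p) (h1 : 0 < l1) (hl : 0 < l2)
    (h23 : l2 < l3) :
    (fun t => Real.sqrt (bandSwap (l2 ^ 2) p (t ^ 2))) '' Set.Ioo l2 l3 = Set.Ioo 0 l1 := by
  ext y
  constructor
  · rintro ⟨η, hη, rfl⟩
    obtain ⟨h0, hb, hc⟩ := sq_mem hl hη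
    obtain ⟨hs0, hsa⟩ := h.swap_mem hb hc
    exact ⟨Real.sqrt_pos.2 hs0, (Real.sqrt_lt' h1).2 hsa⟩
  · rintro ⟨hy0, hy1⟩
    have hya : y ^ 2 < l1 ^ 2 := by nlinarith
    obtain ⟨hs1, hs2⟩ := h.swap_mem' (by positivity) hya
    have hs0 : 0 ≤ bandSwap (l2 ^ 2) p (y ^ 2) := (sq_nonneg l2).trans hs1.le
    refine ⟨Real.sqrt (bandSwap (l2 ^ 2) p (y ^ 2)),
      ⟨(Real.lt_sqrt hl.le).2 hs1, (Real.sqrt_lt' (by linarith)).2 hs2⟩, ?_⟩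
    dsimp only
    rw [Real.sq_sqrt hs0, h.swap_swap (by linarith [h.ap]), Real.sqrt_sq hy0.le]

theorem Bands.swap_injOn (h : Bands (l1 ^ 2) (l2 ^ 2) (l3 ^ 2) p) (hl : 0 < l2) :
    Set.InjOn (fun t => Real.sqrt (bandSwap (l2 ^ 2) p (t ^ 2))) (Set.Ioo l2 l3) := by
  intro s hs t ht hst
  obtain ⟨s0, sb, sc⟩ := sq_mem hl hs
  obtain ⟨t0, tb, tc⟩ := sq_mem hl ht
  have e := (Real.sqrt_inj (h.swap_mem sb sc).1.le (h.swap_mem tb tc).1.le).1 hst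
  have e2 : s ^ 2 = t ^ 2 := by
    rw [← h.swap_swap (x := s ^ 2) (by linarith [h.pb]), e, h.swap_swap (by linarith [h.pb])]
  exact (sq_eq_sq₀ s0.le t0.le).1 e2

/-- The substitution `η ↦ √σ(η²)` transports the lower-band integral to the upper band. -/
theorem Bands.lower_band (h : Bands (l1 ^ 2) (l2 ^ 2) (l3 ^ 2) p) (h1 : 0 < l1) (hl : 0 < l2)
    (h23 : l2 < l3) (W : ℝ) :
    (∫ η in (0:ℝ)..l1, η ^ 2 * (W - η ^ 2) /
        Real.sqrt ((l1 ^ 2 - η ^ 2) * (l2 ^ 2 - η ^ 2) * (l3 ^ 2 - η ^ 2))) =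
      ∫ η in l2..l3, bandSwap (l2 ^ 2) p (η ^ 2) * (W - bandSwap (l2 ^ 2) p (η ^ 2)) /
        upperRadical l1 l2 l3 η := by
  rw [intervalIntegral.integral_of_le h1.le, intervalIntegral.integral_of_le h23.le,
    MeasureTheory.integral_Ioc_eq_integral_Ioo, MeasureTheory.integral_Ioc_eq_integral_Ioo,
    ← h.swap_image h1 hl h23,
    MeasureTheory.integral_image_eq_integral_abs_deriv_smul (f' := fun η =>
      p * (l2 ^ 2 - p) / (η ^ 2 - p) ^ 2 * (2 * η) / (2 * Real.sqrt (bandSwap (l2 ^ 2) p (η ^ 2))))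
      measurableSet_Ioo _ (h.swap_injOn hl)]
  · refine MeasureTheory.setIntegral_congr_fun measurableSet_Ioo fun η hη => ?_
    obtain ⟨h0, hb, hc⟩ := sq_mem hl hη
    have hs0 := (h.swap_mem hb hc).1
    have hxp : 0 < η ^ 2 - p := by linarith [h.pb]
    have hp0 : 0 < p := h.a_pos.trans h.ap
    have hbp := sub_pos.2 h.pb
    have hR : 0 < upperRadical l1 l2 l3 η := Real.sqrt_pos.2 (h.radicand_pos hb hc)
    have hrad := congrArg Real.sqrt (h.swap_radical (x := η ^ 2) (by linarith))
    rw [Real.sqrt_mul (by positivity), ← mul_pow, Real.sqrt_sq (by positivity),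
      Real.sqrt_mul hs0.le] at hrad
    change _ * upperRadical l1 l2 l3 η = _ at hrad
    rw [Real.sq_sqrt hs0.le, smul_eq_mul, abs_of_pos (by positivity)]
    have hs := Real.sqrt_pos.2 hs0
    have hpos : 0 < p * (l2 ^ 2 - p) / (η ^ 2 - p) ^ 2 * η * upperRadical l1 l2 l3 η := by
      positivity
    rw [hrad] at hpos
    have hD := (mul_pos_iff_of_pos_left hs).1 hpos
    generalize bandSwap (l2 ^ 2) p (η ^ 2) = s at *
    generalize p * (l2 ^ 2 - p) / (η ^ 2 - p) ^ 2 = d at *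
    rw [div_mul_div_comm, div_eq_div_iff (by positivity) hR.ne']
    linear_combination 2 * s * (W - s) * hrad
  · intro η hη
    obtain ⟨h0, hb, hc⟩ := sq_mem hl hη
    exact ((bandSwap_sq_deriv (by linarith [h.pb])).sqrt
      (h.swap_mem hb hc).1.ne').hasDerivWithinAt

/-- In the variable `u = x + σ(x)` this is half of the elementary integral
`∫_b^e (u - W)/√((u - b)(e - u)) du = π((b + e)/2 - W)`, with `b = l2²` and `e = l1² + l3²`. -/
theorem Bands.sum_integral (h : Bands (l1 ^ 2) (l2 ^ 2) (l3 ^ 2) p) (hl : 0 < l2)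
    (h23 : l2 < l3) (W : ℝ) :
    (∫ η in l2..l3, (η ^ 2 - bandSwap (l2 ^ 2) p (η ^ 2)) *
        (η ^ 2 + bandSwap (l2 ^ 2) p (η ^ 2) - W) / upperRadical l1 l2 l3 η) =
      Real.pi / 4 * (l1 ^ 2 + l2 ^ 2 + l3 ^ 2 - 2 * W) := by
  have hS := h.swap_continuousOn hl
  have hb : bandSwap (l2 ^ 2) p (l2 ^ 2) = 0 := by simp [bandSwap]
  have hc : bandSwap (l2 ^ 2) p (l3 ^ 2) = l1 ^ 2 := by
    have : l3 ^ 2 - p ≠ 0 := by linarith [h.pb, h.bc]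
    unfold bandSwap
    rw [div_eq_iff this]
    linear_combination h.hp
  have hd : l1 ^ 2 + l3 ^ 2 - l2 ^ 2 ≠ 0 := by linarith [h.a_pos, h.bc]
  rw [intervalIntegral.integral_eq_sub_of_hasDerivAt_of_le (f := fun t =>
    (1 / 2) * ((l2 ^ 2 + (l1 ^ 2 + l3 ^ 2)) / 2 - W) *
      Real.arcsin ((2 * (t ^ 2 + bandSwap (l2 ^ 2) p (t ^ 2)) - l2 ^ 2 -
        (l1 ^ 2 + l3 ^ 2)) / (l1 ^ 2 + l3 ^ 2 - l2 ^ 2)) -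
    (1 / 2) * Real.sqrt ((t ^ 2 + bandSwap (l2 ^ 2) p (t ^ 2) - l2 ^ 2) *
        (l1 ^ 2 + l3 ^ 2 - (t ^ 2 + bandSwap (l2 ^ 2) p (t ^ 2))))) h23.le ?_ ?_ ?_]
  · have e1 : (2 * (l3 ^ 2 + l1 ^ 2) - l2 ^ 2 - (l1 ^ 2 + l3 ^ 2)) / (l1 ^ 2 + l3 ^ 2 - l2 ^ 2)
        = 1 := by rw [div_eq_one_iff_eq hd]; ring
    have e2 : (2 * (l2 ^ 2 + 0) - l2 ^ 2 - (l1 ^ 2 + l3 ^ 2)) / (l1 ^ 2 + l3 ^ 2 - l2 ^ 2)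
        = -1 := by rw [div_eq_iff hd]; ring
    have e3 : (l3 ^ 2 + l1 ^ 2 - l2 ^ 2) * (l1 ^ 2 + l3 ^ 2 - (l3 ^ 2 + l1 ^ 2)) = 0 := by ring
    have e4 : (l2 ^ 2 + 0 - l2 ^ 2) * (l1 ^ 2 + l3 ^ 2 - (l2 ^ 2 + 0)) = 0 := by ring
    simp only [hb, hc, e1, e2, e3, e4, Real.arcsin_one, Real.arcsin_neg, Real.sqrt_zero]
    ring
  · refine ContinuousOn.sub (continuousOn_const.mul
      (Real.continuous_arcsin.comp_continuousOn (by fun_prop))) (by fun_prop)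
  · intro η hη
    refine (((h.angle_deriv hl hη).const_mul _).sub
      ((h.root_deriv hl hη).const_mul (1 / 2))).congr_deriv ?_
    ring
  · exact h.integrable hl h23 (by fun_prop)

/-- The condensate mean for an arbitrary constant `W` in place of `w²`. -/
theorem mean_general (l1 l2 l3 : ℝ)
    (h1 : 0 < l1) (h12 : l1 < l2) (h23 : l2 < l3) (W : ℝ) :
    (∫ η in (0:ℝ)..l1, η ^ 2 * (W - η ^ 2) /
        Real.sqrt ((l1 ^ 2 - η ^ 2) * (l2 ^ 2 - η ^ 2) * (l3 ^ 2 - η ^ 2))) +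
      (∫ η in l2..l3, η ^ 2 * (η ^ 2 - W) /
        Real.sqrt ((η ^ 2 - l1 ^ 2) * (η ^ 2 - l2 ^ 2) * (l3 ^ 2 - η ^ 2))) =
      Real.pi / 4 * (l1 ^ 2 + l2 ^ 2 + l3 ^ 2 - 2 * W) := by
  have hl : 0 < l2 := h1.trans h12
  obtain ⟨p, h⟩ := exists_pole (a := l1 ^ 2) (b := l2 ^ 2) (c := l3 ^ 2) (by positivity)
    (by nlinarith) (by nlinarith)
  have hS := h.swap_continuousOn hl
  rw [h.lower_band h1 hl h23, ← h.sum_integral hl h23 W]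
  change _ + (∫ η in l2..l3, η ^ 2 * (η ^ 2 - W) / upperRadical l1 l2 l3 η) = _
  rw [← intervalIntegral.integral_add (h.integrable hl h23 (by fun_prop))
    (h.integrable hl h23 (by fun_prop))]
  congr 1
  ext η
  ring

end Helpers

/-- The mean of the KdV wave field in the genus-1 soliton condensate:
with `m = (λ₂²-λ₁²)/(λ₃²-λ₁²)`, `μ(m) = E(m)/K(m)` and `w² = λ₃² - (λ₃²-λ₁²)μ(m)`,
`⟨φ⟩ = 4∫_{Γ⁺} η u(η) dη = λ₁² + λ₂² - λ₃² + 2(λ₃²-λ₁²)μ(m)`. -/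
theorem genus1_condensate_mean (l1 l2 l3 : ℝ)
    (h1 : 0 < l1) (h12 : l1 < l2) (h23 : l2 < l3) :
    (4 / Real.pi) *
        (∫ η in (0:ℝ)..l1,
          η ^ 2 * ((l3 ^ 2 - (l3 ^ 2 - l1 ^ 2) *
              (ellipticE ((l2 ^ 2 - l1 ^ 2) / (l3 ^ 2 - l1 ^ 2)) /
                ellipticK ((l2 ^ 2 - l1 ^ 2) / (l3 ^ 2 - l1 ^ 2)))) - η ^ 2) /
            Real.sqrt ((l1 ^ 2 - η ^ 2) * (l2 ^ 2 - η ^ 2) * (l3 ^ 2 - η ^ 2))) +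
      (4 / Real.pi) *
        (∫ η in l2..l3,
          η ^ 2 * (η ^ 2 - (l3 ^ 2 - (l3 ^ 2 - l1 ^ 2) *
              (ellipticE ((l2 ^ 2 - l1 ^ 2) / (l3 ^ 2 - l1 ^ 2)) /
                ellipticK ((l2 ^ 2 - l1 ^ 2) / (l3 ^ 2 - l1 ^ 2))))) /
            Real.sqrt ((η ^ 2 - l1 ^ 2) * (η ^ 2 - l2 ^ 2) * (l3 ^ 2 - η ^ 2))) =
      l1 ^ 2 + l2 ^ 2 - l3 ^ 2 + 2 * (l3 ^ 2 - l1 ^ 2) *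
        (ellipticE ((l2 ^ 2 - l1 ^ 2) / (l3 ^ 2 - l1 ^ 2)) /
          ellipticK ((l2 ^ 2 - l1 ^ 2) / (l3 ^ 2 - l1 ^ 2))) := by
  rw [← mul_add, mean_general l1 l2 l3 h1 h12 h23]
  have := Real.pi_pos
  field_simp
  ring
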